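/- With notation as in the unit-lattice setup: for η_j units generating U_{𝔮₁} modulo roots of unity, m_j = max_i ⌈log|σ_i(η_j)|⌉, and α ∈ K nonzero, one has ∫_{ℝ^r} dx₁⋯dx_r / (max_{1≤i≤r+1} (∏_{j=1}^r |σ_i(η_j)|^{x_j/m_j}·|σ_i(α)|))^{n−1} = (m₁⋯m_r / (R_{K,𝔮₁}·|N(α)|^{(n−1)/n}))·(n/(n−1))^r. -/

import Mathlib

open NumberField NumberField.Units NumberField.InfinitePlace

open MeasureTheory in
theorem aux_tail {a : ℝ} (ha : 0 < a) (c : ℝ) :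
    ∫⁻ s : ℝ, (Set.Ici c).indicator (fun s => ENNReal.ofReal (a * Real.exp (-a * s))) s
      = ENNReal.ofReal (Real.exp (-a * c)) := by
  rw [lintegral_indicator measurableSet_Ici, setLIntegral_congr Ioi_ae_eq_Ici.symm,
    ← ofReal_integral_eq_lintegral_ofReal]
  · rw [integral_const_mul, integral_exp_mul_Ioi (by linarith)]
    congr 1
    field_simp
  · exact ((integrableOn_exp_mul_Ioi (by linarith) c)).const_mul a
  · exact Filter.Eventually.of_forall fun s => by positivity

open MeasureTheory in
theorem aux_orthant {r : ℕ} {b : ℝ} (hb : 0 < b) :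
    ∫⁻ u : Fin r → ℝ, ENNReal.ofReal (∏ i, (Set.Ici (0:ℝ)).indicator (fun y => Real.exp (-b * y)) (u i))
      = ENNReal.ofReal ((1 / b) ^ r) := by
  have hint : Integrable ((Set.Ici (0:ℝ)).indicator (fun y => Real.exp (-b * y))) := by
    rw [integrable_indicator_iff measurableSet_Ici, integrableOn_Ici_iff_integrableOn_Ioi]
    exact integrableOn_exp_mul_Ioi (by linarith) 0
  rw [← ofReal_integral_eq_lintegral_ofReal]
  · rw [integral_fintype_prod_volume_eq_pow, integral_indicator measurableSet_Ici,
      integral_Ici_eq_integral_Ioi, integral_exp_mul_Ioi (by linarith)]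
    simp
  · exact Integrable.fintype_prod (fun _ => hint)
  · exact Filter.Eventually.of_forall fun s => Finset.prod_nonneg fun i _ =>
      Set.indicator_nonneg (fun _ _ => by positivity) _

open MeasureTheory in
theorem aux_core {r : ℕ} (d : Fin r → ℝ) (d' D a : ℝ) (hD : D = d' + ∑ j, d j)
    (hDpos : 0 < D) (ha : 0 < a) (M : (Fin r → ℝ) → ℝ)
    (hM : ∀ t s, M t ≤ s ↔ (∀ j, t j ≤ d j * s) ∧ -∑ j, t j ≤ d' * s) :
    ∫⁻ t : Fin r → ℝ, ENNReal.ofReal (Real.exp (-a * M t)) = ENNReal.ofReal ((D / a) ^ r) := by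
  have hMmeas : Measurable M := by
    apply measurable_of_Iic
    intro s
    have : M ⁻¹' Set.Iic s = {t | (∀ j, t j ≤ d j * s) ∧ -∑ j, t j ≤ d' * s} := by
      ext t; simp [hM]
    rw [this]
    measurability
  have h1 : ∀ t, ENNReal.ofReal (Real.exp (-a * M t)) =
      ∫⁻ s : ℝ, {p : (Fin r → ℝ) × ℝ | M p.1 ≤ p.2}.indicator
        (fun p => ENNReal.ofReal (a * Real.exp (-a * p.2))) (t, s) := by
    intro t
    rw [← aux_tail ha (M t)]
    rfl
  have hset : MeasurableSet {p : (Fin r → ℝ) × ℝ | M p.1 ≤ p.2} :=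
    measurableSet_le (by fun_prop) (by fun_prop)
  have hset2 : MeasurableSet {p : ℝ × (Fin r → ℝ) | (∀ j, 0 ≤ p.2 j) ∧ (∑ j, p.2 j) / D ≤ p.1} := by
    measurability
  have h2 : ∀ s : ℝ, ∫⁻ t : Fin r → ℝ, {p : (Fin r → ℝ) × ℝ | M p.1 ≤ p.2}.indicator
        (fun p => ENNReal.ofReal (a * Real.exp (-a * p.2))) (t, s) =
      ∫⁻ u : Fin r → ℝ, {p : ℝ × (Fin r → ℝ) | (∀ j, 0 ≤ p.2 j) ∧ (∑ j, p.2 j) / D ≤ p.1}.indicator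
        (fun p => ENNReal.ofReal (a * Real.exp (-a * p.1))) (s, u) := by
    intro s
    rw [← lintegral_sub_left_eq_self _ (fun j => d j * s)]
    congr 1
    ext u
    have hiff : M ((fun j => d j * s) - u) ≤ s ↔ (∀ j, 0 ≤ u j) ∧ (∑ j, u j) / D ≤ s := by
      rw [hM, div_le_iff₀ hDpos]
      simp only [Pi.sub_apply, Finset.sum_sub_distrib, ← Finset.sum_mul]
      refine and_congr (forall_congr' fun j => by simp) ?_
      rw [hD]
      constructor <;> intro h <;> linarith
    simp only [Set.indicator_apply, Set.mem_ofPred_eq, hiff]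
  simp_rw [h1]
  rw [lintegral_lintegral_swap]
  · simp_rw [h2]
    rw [lintegral_lintegral_swap]
    · have h3 : ∀ u : Fin r → ℝ, ∫⁻ s : ℝ, {p : ℝ × (Fin r → ℝ) | (∀ j, 0 ≤ p.2 j) ∧ (∑ j, p.2 j) / D ≤ p.1}.indicator
          (fun p => ENNReal.ofReal (a * Real.exp (-a * p.1))) (s, u) =
          ENNReal.ofReal (∏ i, (Set.Ici (0:ℝ)).indicator (fun y => Real.exp (-(a/D) * y)) (u i)) := by
        intro u
        by_cases hu : ∀ j, 0 ≤ u j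
        · have e1 : ∏ i, (Set.Ici (0:ℝ)).indicator (fun y => Real.exp (-(a/D) * y)) (u i) =
              Real.exp (-a * ((∑ j, u j) / D)) := by
            rw [Finset.prod_congr rfl (fun i _ => Set.indicator_of_mem (Set.mem_Ici.mpr (hu i)) _), ← Real.exp_sum,
              ← Finset.mul_sum]
            congr 1
            ring
          rw [e1, ← aux_tail ha]
          congr 1
          ext s
          simp [Set.indicator_apply, hu]
        · have hu' := hu
          push Not at hu'
          obtain ⟨j, hj⟩ := hu'
          rw [Finset.prod_eq_zero (Finset.mem_univ j)]
          · simp [Set.indicator_apply, hu]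
          · simp [Set.indicator_apply, hj]
      simp_rw [h3]
      rw [aux_orthant (by positivity)]
      simp
    · exact (Measurable.indicator (by fun_prop) hset2).aemeasurable
  · exact (Measurable.indicator (by fun_prop) hset).aemeasurable

theorem aux_det (K : Type*) [Field K] [NumberField K]
    (η : Fin (rank K) → (𝓞 K)ˣ)
    (hindep : ∀ c : Fin (rank K) → ℤ, (∏ j, η j ^ c j) ∈ torsion K → c = 0)
    (w' : InfinitePlace K) (e : {w : InfinitePlace K // w ≠ w'} ≃ Fin (rank K)) :
    (Matrix.of fun i j : Fin (rank K) =>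
            (mult (e.symm j).val : ℝ) * Real.log ((e.symm j).val ((η i : 𝓞 K) : K))).det ≠ 0 := by
  classical
  have hmax : IsMaxRank η := by
    have h₂ : DiscreteTopology
        (Submodule.span ℤ (Set.range fun i ↦ (logEmbedding K) (Additive.ofMul (η i)))) := by
      rw [← SetLike.isDiscrete_iff_discreteTopology]
      refine (inferInstance : DiscreteTopology (unitLattice K)).isDiscrete.mono ?_
      rw [SetLike.coe_subset_coe, Submodule.span_le]
      rintro _ ⟨i, rfl⟩
      exact ⟨Additive.ofMul (η i), Submodule.mem_top, rfl⟩
    have h3 : LinearIndependent ℤ (fun i ↦ (logEmbedding K) (Additive.ofMul (η i))) := by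
      rw [Fintype.linearIndependent_iff]
      intro g hg
      refine congrFun (hindep g ?_)
      rw [← dirichletUnitTheorem.logEmbedding_eq_zero_iff, ← hg, ofMul_prod, map_sum]
      simp
    rw [IsMaxRank, linearIndependent_iff_card_eq_finrank_span,
      Real.finrank_eq_int_finrank_of_discrete h₂, Set.finrank, finrank_span_eq_card h3]
  have h := regOfFamily_ne_zero hmax
  rw [regOfFamily_eq_det η w' e, ← Matrix.det_reindex_self e] at h
  simpa [Matrix.reindex_apply, Matrix.submatrix] using h

open MeasureTheory in
theorem aux_lin {r : ℕ} (A : Matrix (Fin r) (Fin r) ℝ) (hA : A.det ≠ 0) (b : Fin r → ℝ)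
    (f : (Fin r → ℝ) → ENNReal) (hf : Measurable f) :
    ∫⁻ x : Fin r → ℝ, f (A.mulVec x + b) = ENNReal.ofReal |A.det|⁻¹ * ∫⁻ t : Fin r → ℝ, f t := by
  have h := Real.map_matrix_volume_pi_eq_smul_volume_pi hA
  have h1 : ∫⁻ x : Fin r → ℝ, f (A.mulVec x + b) =
      ∫⁻ t : Fin r → ℝ, f (t + b) ∂(Measure.map (Matrix.toLin' A) volume) := by
    rw [lintegral_map (by fun_prop) (by fun_prop)]
    rfl
  rw [h1, h, lintegral_smul_measure, lintegral_add_right_eq_self f b, abs_inv]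
  rfl

theorem aux_log_le {K : Type*} [Field K] [NumberField K] {r : ℕ}
    (g : Fin r → K) (hg : ∀ j, g j ≠ 0) (y : Fin r → ℝ) (α : K) (hα : α ≠ 0)
    (w : InfinitePlace K) :
    0 < (∏ j, (w (g j)) ^ (y j)) * w α ∧
    Real.log ((∏ j, (w (g j)) ^ (y j)) * w α) = ∑ j, y j * Real.log (w (g j)) + Real.log (w α) := by
  have hp : ∀ j, 0 < w (g j) := fun j => pos_iff.mpr (hg j)
  have hw : 0 < w α := pos_iff.mpr hα
  refine ⟨mul_pos (Finset.prod_pos fun j _ => Real.rpow_pos_of_pos (hp j) _) hw, ?_⟩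
  rw [Real.log_mul (Finset.prod_pos fun j _ => Real.rpow_pos_of_pos (hp j) _).ne' hw.ne',
    Real.log_prod (fun j _ => (Real.rpow_pos_of_pos (hp j) _).ne')]
  simp_rw [Real.log_rpow (hp _)]

set_option maxHeartbeats 2000000 in
open MeasureTheory in
theorem integral_formula (K : Type*) [Field K] [NumberField K]
    (n : ℕ) (hn : n = Module.finrank ℚ K) (hn2 : 2 ≤ n)
    (hr : 1 ≤ rank K)
    (q : Ideal (𝓞 K)) (hq : q ≠ ⊥)
    (U : Subgroup ((𝓞 K)ˣ))
    (hU : ∀ u : (𝓞 K)ˣ, u ∈ U ↔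
      ((u : 𝓞 K) - 1 ∈ q ∧ ∀ φ : K →+* ℝ, 0 < φ ((u : 𝓞 K) : K)))
    (η : Fin (rank K) → (𝓞 K)ˣ)
    (hmem : ∀ j, η j ∈ U)
    (hindep : ∀ c : Fin (rank K) → ℤ, (∏ j, η j ^ c j) ∈ torsion K → c = 0)
    (hgen : ∀ u ∈ U, ∃ ζ ∈ torsion K, ∃ c : Fin (rank K) → ℤ, u = ζ * ∏ j, η j ^ c j)
    (m : Fin (rank K) → ℕ) (hm1 : ∀ j, 1 ≤ m j)
    (hm : ∀ j, (m j : ℤ) = Finset.univ.sup'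
      (Finset.univ_nonempty_iff.mpr inferInstance)
      (fun w : InfinitePlace K => ⌈Real.log (w ((η j : 𝓞 K) : K))⌉))
    (α : K) (hα : α ≠ 0)
    (w' : InfinitePlace K) (e : {w : InfinitePlace K // w ≠ w'} ≃ Fin (rank K)) :
    ∫ x : Fin (rank K) → ℝ,
      (((Finset.univ.sup' (Finset.univ_nonempty_iff.mpr inferInstance)
        (fun w : InfinitePlace K =>
          (∏ j, (w ((η j : 𝓞 K) : K)) ^ ((x j) / (m j : ℝ))) * w α)) ^ (n - 1))⁻¹) =
      (∏ j, (m j : ℝ)) /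
        (|(Matrix.of fun i j : Fin (rank K) =>
            (mult (e.symm j).val : ℝ) * Real.log ((e.symm j).val ((η i : 𝓞 K) : K))).det| *
          (|Algebra.norm ℚ α| : ℝ) ^ (((n:ℝ) - 1) / n)) *
        ((n : ℝ) / ((n : ℝ) - 1)) ^ (rank K) := by
  classical
  have hdet := aux_det K η hindep w' e
  set B := (Matrix.of fun i j : Fin (rank K) =>
            (mult (e.symm j).val : ℝ) * Real.log ((e.symm j).val ((η i : 𝓞 K) : K))) with hB
  have hmpos : ∀ j, (0:ℝ) < m j := fun j => by exact_mod_cast hm1 j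
  have hnpos : (0:ℝ) < n := by exact_mod_cast (by omega : 0 < n)
  have ha : (0:ℝ) < (n:ℝ) - 1 := by
    have : (2:ℝ) ≤ n := by exact_mod_cast hn2
    linarith
  have hmult : ∀ w : InfinitePlace K, (0:ℝ) < mult w := fun w => by exact_mod_cast mult_pos
  have hηne : ∀ j, ((η j : 𝓞 K) : K) ≠ 0 := fun j => by simp
  -- splitting of sums
  have hsplit : ∀ f : InfinitePlace K → ℝ, ∑ w, f w = f w' + ∑ k, f (e.symm k).val := by
    intro f
    rw [Fintype.sum_eq_add_sum_subtype_ne f w']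
    congr 1
    exact (Equiv.sum_comp e.symm (fun w => f w.val)).symm
  have hmultsum : ∑ w : InfinitePlace K, (mult w : ℝ) = n := by
    rw [hn]; exact_mod_cast sum_mult_eq (K := K)
  have hlogη : ∀ j, ∑ w : InfinitePlace K, (mult w : ℝ) * Real.log (w ((η j : 𝓞 K) : K)) = 0 :=
    fun j => sum_mult_mul_log (η j)
  have hNpos : (0:ℝ) < |((Algebra.norm ℚ α : ℚ) : ℝ)| := by
    simpa using hα
  have hlogα : ∑ w : InfinitePlace K, (mult w : ℝ) * Real.log (w α) =
      Real.log (|((Algebra.norm ℚ α : ℚ) : ℝ)|) := by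
    have := prod_eq_abs_norm α
    push_cast at this
    rw [← this, Real.log_prod (fun w _ => pow_ne_zero _ (pos_iff.mpr hα).ne')]
    simp_rw [Real.log_pow]
  set N : ℝ := |((Algebra.norm ℚ α : ℚ) : ℝ)| with hN
  set c : ℝ := Real.log N / n with hc
  -- the sup function
  set S : (Fin (rank K) → ℝ) → ℝ := fun x =>
    Finset.univ.sup' (Finset.univ_nonempty_iff.mpr inferInstance)
        (fun w : InfinitePlace K =>
          (∏ j, (w ((η j : 𝓞 K) : K)) ^ ((x j) / (m j : ℝ))) * w α) with hSdef
  set Y : (Fin (rank K) → ℝ) → InfinitePlace K → ℝ := fun x w =>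
    ∑ j, x j / m j * Real.log (w ((η j : 𝓞 K) : K)) + Real.log (w α) with hY
  have hSpos : ∀ x, 0 < S x := by
    intro x
    rw [hSdef, Finset.lt_sup'_iff]
    exact ⟨w', Finset.mem_univ _, (aux_log_le _ hηne (fun j => x j / m j) α hα w').1⟩
  have hSle : ∀ x s, Real.log (S x) ≤ s ↔ ∀ w, Y x w ≤ s := by
    intro x s
    rw [Real.log_le_iff_le_exp (hSpos x), hSdef, Finset.sup'_le_iff]
    refine ⟨fun h w => ?_, fun h w _ => ?_⟩
    · have := h w (Finset.mem_univ _)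
      obtain ⟨h1, h2⟩ := aux_log_le _ hηne (fun j => x j / m j) α hα w
      rw [← Real.log_le_iff_le_exp h1, h2] at this
      exact this
    · obtain ⟨h1, h2⟩ := aux_log_le _ hηne (fun j => x j / m j) α hα w
      rw [← Real.log_le_iff_le_exp h1, h2]
      exact h w
  have hYsum : ∀ x, ∑ w : InfinitePlace K, (mult w : ℝ) * (Y x w - c) = 0 := by
    intro x
    have h1 : ∑ w : InfinitePlace K, (mult w : ℝ) * ∑ j, x j / m j * Real.log (w ((η j : 𝓞 K) : K))
        = 0 := by
      simp_rw [Finset.mul_sum]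
      rw [Finset.sum_comm]
      refine Finset.sum_eq_zero fun j _ => ?_
      rw [← mul_zero (x j / m j), ← hlogη j, Finset.mul_sum]
      exact Finset.sum_congr rfl fun w _ => by ring
    simp only [hY, mul_sub, mul_add, Finset.sum_sub_distrib, Finset.sum_add_distrib, h1, hlogα,
      ← Finset.sum_mul, hmultsum]
    rw [hc]
    field_simp
    simp
  -- the abstract max function
  set M : (Fin (rank K) → ℝ) → ℝ := fun t =>
    Finset.univ.sup' (Finset.univ_nonempty_iff.mpr inferInstance)
      (fun w : InfinitePlace K => if h : w = w' then (-∑ k, t k) / mult w' else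
        t (e ⟨w, h⟩) / mult w) with hMdef
  have hM : ∀ t s, M t ≤ s ↔
      (∀ k, t k ≤ (mult (e.symm k).val : ℝ) * s) ∧ -∑ k, t k ≤ (mult w' : ℝ) * s := by
    intro t s
    rw [hMdef, Finset.sup'_le_iff]
    refine ⟨fun h => ⟨fun k => ?_, ?_⟩, fun h w _ => ?_⟩
    · have := h (e.symm k).val (Finset.mem_univ _)
      rw [dif_neg (e.symm k).2, div_le_iff₀ (hmult _)] at this
      simp only [Subtype.coe_eta, Equiv.apply_symm_apply] at this
      linarith
    · have := h w' (Finset.mem_univ _)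
      rw [dif_pos rfl, div_le_iff₀ (hmult _)] at this
      linarith
    · by_cases hw : w = w'
      · rw [dif_pos hw, div_le_iff₀ (hmult _)]
        linarith [h.2]
      · rw [dif_neg hw, div_le_iff₀ (hmult _)]
        have := h.1 (e ⟨w, hw⟩)
        simp only [Equiv.symm_apply_apply] at this
        linarith
  have hMmeas : Measurable M := by
    apply Continuous.measurable
    rw [hMdef]
    apply Continuous.finset_sup'_apply
    intro w _
    by_cases hw : w = w'
    · simp only [hw, dite_true]; fun_prop
    · simp only [hw, dite_false]; fun_prop
  set A : Matrix (Fin (rank K)) (Fin (rank K)) ℝ :=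
    B.transpose * Matrix.diagonal (fun i => ((m i : ℝ))⁻¹) with hA
  have hAdet : A.det = B.det * (∏ j, (m j : ℝ))⁻¹ := by
    rw [hA, Matrix.det_mul, Matrix.det_transpose, Matrix.det_diagonal, Finset.prod_inv_distrib]
  have hprodm : 0 < ∏ j, (m j : ℝ) := Finset.prod_pos fun j _ => hmpos j
  have hAdet0 : A.det ≠ 0 := by
    rw [hAdet]
    exact mul_ne_zero hdet (inv_ne_zero hprodm.ne')
  set b : Fin (rank K) → ℝ := fun k => (mult (e.symm k).val : ℝ) * (Real.log ((e.symm k).val α) - c)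
    with hb
  have hAx : ∀ x k, (A.mulVec x + b) k = (mult (e.symm k).val : ℝ) * (Y x (e.symm k).val - c) := by
    intro x k
    simp only [hA, hB, hb, hY, Pi.add_apply, Matrix.mulVec, dotProduct, Matrix.mul_diagonal,
      Matrix.transpose_apply, Matrix.of_apply]
    rw [add_sub_assoc, mul_add, Finset.mul_sum]
    congr 1
    exact Finset.sum_congr rfl fun j _ => by ring
  have hMS : ∀ x, Real.log (S x) = M (A.mulVec x + b) + c := by
    intro x
    refine eq_of_forall_ge_iff fun s => ?_
    rw [hSle, ← le_sub_iff_add_le, hM]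
    have h0 := hYsum x
    rw [hsplit] at h0
    have h1 : -∑ k, (A.mulVec x + b) k = (mult w' : ℝ) * (Y x w' - c) := by
      simp_rw [hAx]; linarith
    rw [h1]
    simp_rw [hAx, mul_le_mul_iff_right₀ (hmult _), sub_le_sub_iff_right]
    refine ⟨fun h => ⟨fun k => h _, h _⟩, fun h w => ?_⟩
    by_cases hw : w = w'
    · rw [hw]; exact h.2
    · simpa using h.1 (e ⟨w, hw⟩)
  have hint : ∀ x, (S x ^ (n - 1))⁻¹ =
      Real.exp (-((n:ℝ) - 1) * c) * Real.exp (-((n:ℝ) - 1) * M (A.mulVec x + b)) := by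
    intro x
    rw [← Real.exp_add, ← Real.exp_log (pow_pos (hSpos x) (n-1)), ← Real.exp_neg, Real.log_pow,
      hMS x, Nat.cast_sub (by omega)]
    congr 1
    push_cast
    ring
  change ∫ x, (S x ^ (n - 1))⁻¹ = _
  simp_rw [hint]
  rw [integral_const_mul, integral_eq_lintegral_of_nonneg_ae
    (Filter.Eventually.of_forall fun x => by positivity)
    (Measurable.aestronglyMeasurable (by fun_prop))]
  rw [aux_lin A hAdet0 b (fun t => ENNReal.ofReal (Real.exp (-((n:ℝ) - 1) * M t))) (by fun_prop),
    aux_core (fun k => (mult (e.symm k).val : ℝ)) (mult w') n ((n:ℝ)-1)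
      (by rw [← hmultsum, hsplit]) hnpos ha M hM, ENNReal.toReal_mul,
    ENNReal.toReal_ofReal (inv_nonneg.mpr (abs_nonneg _)),
    ENNReal.toReal_ofReal (pow_nonneg (div_pos hnpos ha).le _), hAdet, abs_mul,
    abs_inv, abs_of_pos hprodm]
  have hexp : Real.exp (-((n:ℝ) - 1) * c) = (N ^ (((n:ℝ) - 1) / n))⁻¹ := by
    rw [Real.rpow_def_of_pos hNpos, ← Real.exp_neg, hc]
    congr 1
    ring
  rw [hexp]
  have hBpos : 0 < |B.det| := abs_pos.mpr hdet
  have hNp : 0 < N ^ (((n:ℝ) - 1) / n) := Real.rpow_pos_of_pos hNpos _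
  generalize N ^ (((n:ℝ) - 1) / n) = P at *
  generalize ((n:ℝ) / ((n:ℝ) - 1)) ^ (rank K) = Q
  field_simp
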